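/- arXiv:2203.08375 — 2 statements merged into one kernel-verified Lean document; each statement's English description precedes it below -/
import Mathlib

section
/- Let d∈(0,1] and 0<d'<d''<d. Then φ̄_d minimizes the energy locally: for every absolutely continuous function ψ:[d',d'']→ℝ whose a.e. derivative belongs to L²(d',d'') and which satisfies ψ(d')=φ̄_d(d') and ψ(d'')=φ̄_d(d''), one has ∫_{d'}^{d''} (|φ̄_d'(s)|²/2 + F(φ̄_d(s)))ds ≤ ∫_{d'}^{d''} (|ψ'(s)|²/2 + F(ψ(s)))ds. -/
open Real Set MeasureTheory

noncomputable section

/-- `φ` solves the boundary value problem `φ'' = f(φ)` on `(0,d)`, `φ(0) = 0`,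
`φ(d) = Q`, `0 < φ < Q` on `(0,d)`, with `φ ∈ C²((0,d)) ∩ C¹([0,d])`. -/
def IsBVPSol (Q : ℝ) (f : ℝ → ℝ) (d : ℝ) (φ : ℝ → ℝ) : Prop :=
  ContDiffOn ℝ 1 φ (Set.Icc 0 d) ∧ ContDiffOn ℝ 2 φ (Set.Ioo 0 d) ∧
  (∀ x ∈ Set.Ioo (0 : ℝ) d, deriv (deriv φ) x = f (φ x)) ∧
  φ 0 = 0 ∧ φ d = Q ∧ (∀ x ∈ Set.Ioo (0 : ℝ) d, 0 < φ x ∧ φ x < Q)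

/-!
Along a solution the quantity `φ' ^ 2 / 2 - F(φ)` is a constant `E`. Since `F` has a global minimum
at `0`, which is strict on `(0, Q)`, letting `x → 0` shows that `F + E` is nonnegative, and positive
on `(0, Q)`; hence `φ` is increasing and solves the first-order equation `φ' = h(φ)` with
`h = √(2 (F + E))`. For every competitor `ψ`,

  `ψ' ^ 2 / 2 + F(ψ) = h(ψ) ψ' - E + (ψ' - h(ψ)) ^ 2 / 2`.

The first two terms on the right integrate to `∫ u in ψ a..ψ b, h u - E (b - a)`, which depends
only on the boundary values, and the square vanishes for `ψ = φ`.

For the given force, conservation of energy along `φ̄₁` itself reads `F(φ̄₁) = φ̄₁' ^ 2 / 2`, so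
that `F` is positive on `(0, Q)`.
-/

section AbsolutelyContinuous

theorem absolutelyContinuousOnInterval_of_dist_le_mul {X Y : Type*} [PseudoMetricSpace X]
    [PseudoMetricSpace Y] {χ : ℝ → X} {ψ : ℝ → Y} {a b K : ℝ}
    (hψ : AbsolutelyContinuousOnInterval ψ a b)
    (hχ : ∀ x ∈ uIcc a b, ∀ y ∈ uIcc a b, dist (χ x) (χ y) ≤ K * dist (ψ x) (ψ y)) :
    AbsolutelyContinuousOnInterval χ a b := by
  refine squeeze_zero' (.of_forall fun E => Finset.sum_nonneg fun _ _ => dist_nonneg) ?_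
    (by simpa only [mul_zero] using Filter.Tendsto.const_mul K hψ)
  filter_upwards [Filter.mem_inf_of_right (Filter.mem_principal_self _)] with E hE
  rw [Finset.mul_sum]
  exact Finset.sum_le_sum fun i hi => hχ _ (hE.1 i hi).1 _ (hE.1 i hi).2

variable {a b c : ℝ} {h ψ ψ' : ℝ → ℝ}

theorem absolutelyContinuousOnInterval_comp_of_contDiff {H : ℝ → ℝ} (hH : ContDiff ℝ 1 H)
    (hψ : AbsolutelyContinuousOnInterval ψ a b) :
    AbsolutelyContinuousOnInterval (H ∘ ψ) a b := by
  obtain ⟨C, hC⟩ := hψ.exists_bound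
  have hmaps : MapsTo ψ (uIcc a b) (Icc (-C) C) := fun x hx => abs_le.1 (hC x hx)
  obtain ⟨K, hK⟩ := hH.contDiffOn.exists_lipschitzOnWith one_ne_zero (convex_Icc (-C) C)
    isCompact_Icc
  exact absolutelyContinuousOnInterval_of_dist_le_mul hψ fun x hx y hy =>
    hK.dist_le_mul _ (hmaps hx) _ (hmaps hy)

theorem intervalIntegrable_of_ae_hasDerivAt (hψ : AbsolutelyContinuousOnInterval ψ a b)
    (hψ' : ∀ᵐ x, x ∈ uIoc a b → HasDerivAt ψ (ψ' x) x) :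
    IntervalIntegrable ψ' volume a b := by
  refine hψ.intervalIntegrable_deriv.congr_ae ?_
  rw [Filter.EventuallyEq, ae_restrict_iff' measurableSet_uIoc]
  filter_upwards [hψ'] with x hx hxab
  exact (hx hxab).deriv

theorem integral_comp_mul_of_ae_hasDerivAt (hh : Continuous h)
    (hψ : AbsolutelyContinuousOnInterval ψ a b)
    (hψ' : ∀ᵐ x, x ∈ uIoc a b → HasDerivAt ψ (ψ' x) x) :
    ∫ x in a..b, h (ψ x) * ψ' x = ∫ u in ψ a..ψ b, h u := by
  set H : ℝ → ℝ := fun u => ∫ v in ψ a..u, h v with hH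
  have hderiv (u : ℝ) : HasDerivAt H (h u) u := (hh.integral_hasStrictDerivAt _ u).hasDerivAt
  have hcontDiff : ContDiff ℝ 1 H := by
    rw [contDiff_one_iff_deriv, deriv_eq hderiv]
    exact ⟨fun u => (hderiv u).differentiableAt, hh⟩
  calc ∫ x in a..b, h (ψ x) * ψ' x = ∫ x in a..b, deriv (H ∘ ψ) x := by
        refine intervalIntegral.integral_congr_ae ?_
        filter_upwards [hψ'] with x hx hxab
        exact ((hderiv _).comp x (hx hxab)).deriv.symm
    _ = H (ψ b) - H (ψ a) :=
        (absolutelyContinuousOnInterval_comp_of_contDiff hcontDiff hψ).integral_deriv_eq_sub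
    _ = ∫ u in ψ a..ψ b, h u := by simp [hH]

theorem absolutelyContinuousOnInterval_of_eq_add_integral (hψ' : IntervalIntegrable ψ' volume a b)
    (hψ : ∀ x ∈ uIcc a b, ψ x = c + ∫ s in a..x, ψ' s) :
    AbsolutelyContinuousOnInterval ψ a b :=
  absolutelyContinuousOnInterval_of_dist_le_mul (K := 1)
    (hψ'.absolutelyContinuousOnInterval_intervalIntegral left_mem_uIcc) fun x hx y hy => by
      rw [hψ x hx, hψ y hy, dist_add_left, one_mul]

theorem ae_hasDerivAt_of_eq_add_integral (hψ' : IntervalIntegrable ψ' volume a b)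
    (hψ : ∀ x ∈ uIcc a b, ψ x = c + ∫ s in a..x, ψ' s) :
    ∀ᵐ x, x ∈ uIoc a b → HasDerivAt ψ (ψ' x) x := by
  filter_upwards [hψ'.ae_hasDerivAt_integral, Measure.ae_ne volume (max a b)] with x hx hne hxab
  have hnhds : uIcc a b ∈ nhds x := Icc_mem_nhds hxab.1 (hxab.2.lt_of_ne hne)
  have hderiv := (hx (uIoc_subset_uIcc hxab) a left_mem_uIcc).const_add c
  exact hderiv.congr_of_eventuallyEq (Filter.mem_of_superset hnhds hψ)

end AbsolutelyContinuous

section Energy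

variable {F ψ ψ' : ℝ → ℝ} {E a b : ℝ}

theorem integral_sqrt_sub_le_integral_energy (hF : Continuous F) (hFE : ∀ u, 0 ≤ F u + E)
    (hab : a ≤ b) (hψ : AbsolutelyContinuousOnInterval ψ a b)
    (hψ' : ∀ᵐ x, x ∈ uIoc a b → HasDerivAt ψ (ψ' x) x)
    (hψ'2 : IntervalIntegrable (fun s => ψ' s ^ 2) volume a b) :
    (∫ u in ψ a..ψ b, √(2 * (F u + E))) - (b - a) * E ≤
      ∫ s in a..b, (ψ' s ^ 2 / 2 + F (ψ s)) := by
  set h : ℝ → ℝ := fun u => √(2 * (F u + E))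
  have hh : Continuous h := by fun_prop
  have hsq (u : ℝ) : h u ^ 2 = 2 * (F u + E) := Real.sq_sqrt (by linarith [hFE u])
  have hint : IntervalIntegrable (fun s => h (ψ s) * ψ' s) volume a b :=
    (intervalIntegrable_of_ae_hasDerivAt hψ hψ').continuousOn_mul
      (hh.comp_continuousOn hψ.continuousOn)
  calc (∫ u in ψ a..ψ b, h u) - (b - a) * E = ∫ s in a..b, (h (ψ s) * ψ' s - E) := by
        rw [intervalIntegral.integral_sub hint intervalIntegrable_const,
          integral_comp_mul_of_ae_hasDerivAt hh hψ hψ', intervalIntegral.integral_const,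
          smul_eq_mul]
    _ ≤ ∫ s in a..b, (ψ' s ^ 2 / 2 + F (ψ s)) := by
        refine intervalIntegral.integral_mono_on hab (hint.sub intervalIntegrable_const)
          ((hψ'2.div_const 2).add (hF.comp_continuousOn hψ.continuousOn).intervalIntegrable)
          fun x _ => ?_
        linarith [two_mul_le_add_sq (h (ψ x)) (ψ' x), hsq (ψ x)]

theorem integral_energy_eq_integral_sqrt_sub (hF : Continuous F) (hFE : ∀ u, 0 ≤ F u + E)
    (hψ : AbsolutelyContinuousOnInterval ψ a b)
    (hψ' : ∀ᵐ x, x ∈ uIoc a b → HasDerivAt ψ (√(2 * (F (ψ x) + E))) x) :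
    ∫ s in a..b, (deriv ψ s ^ 2 / 2 + F (ψ s)) =
      (∫ u in ψ a..ψ b, √(2 * (F u + E))) - (b - a) * E := by
  set h : ℝ → ℝ := fun u => √(2 * (F u + E))
  have hh : Continuous h := by fun_prop
  have hsq (u : ℝ) : h u ^ 2 = 2 * (F u + E) := Real.sq_sqrt (by linarith [hFE u])
  have hcont : ContinuousOn (fun s => h (ψ s)) (uIcc a b) := hh.comp_continuousOn hψ.continuousOn
  have hint : IntervalIntegrable (fun s => h (ψ s) * h (ψ s)) volume a b :=
    (hcont.mul hcont).intervalIntegrable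
  calc ∫ s in a..b, (deriv ψ s ^ 2 / 2 + F (ψ s)) = ∫ s in a..b, (h (ψ s) * h (ψ s) - E) := by
        refine intervalIntegral.integral_congr_ae ?_
        filter_upwards [hψ'] with x hx hxab
        rw [(hx hxab).deriv]
        linarith [hsq (ψ x)]
    _ = (∫ u in ψ a..ψ b, h u) - (b - a) * E := by
        rw [intervalIntegral.integral_sub hint intervalIntegrable_const,
          integral_comp_mul_of_ae_hasDerivAt hh hψ hψ', intervalIntegral.integral_const,
          smul_eq_mul]

end Energy

/-- `F` is a potential of the force `f` on `(0, Q)` having a global minimum at `0` that is not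
attained in `(0, Q)`. The value of `F` at `0` is not normalized. -/
structure IsWellPotential (Q : ℝ) (f F : ℝ → ℝ) : Prop where
  continuous : Continuous F
  hasDerivAt : ∀ u ∈ Ioo 0 Q, HasDerivAt F (f u) u
  apply_zero_le : ∀ u, F 0 ≤ F u
  apply_zero_lt : ∀ u ∈ Ioo 0 Q, F 0 < F u

namespace IsBVPSol

variable {Q d x E : ℝ} {f F φ : ℝ → ℝ}

theorem mapsTo_Ioo (hφ : IsBVPSol Q f d φ) : MapsTo φ (Ioo 0 d) (Ioo 0 Q) :=
  hφ.2.2.2.2.2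

theorem hasDerivAt (hφ : IsBVPSol Q f d φ) (hx : x ∈ Ioo 0 d) : HasDerivAt φ (deriv φ x) x :=
  ((hφ.2.1.contDiffAt (isOpen_Ioo.mem_nhds hx)).differentiableAt two_ne_zero).hasDerivAt

theorem hasDerivAt_deriv (hφ : IsBVPSol Q f d φ) (hx : x ∈ Ioo 0 d) :
    HasDerivAt (deriv φ) (f (φ x)) x := by
  obtain ⟨-, hC2, hode, -⟩ := hφ
  rw [← hode x hx]
  have hC1 : ContDiffOn ℝ 1 (deriv φ) (Ioo 0 d) := hC2.deriv_of_isOpen isOpen_Ioo le_rfl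
  exact ((hC1.contDiffAt (isOpen_Ioo.mem_nhds hx)).differentiableAt one_ne_zero).hasDerivAt

theorem exists_deriv_sq_eq (hφ : IsBVPSol Q f d φ) (hF : ∀ u ∈ Ioo 0 Q, HasDerivAt F (f u) u) :
    ∃ E, ∀ x ∈ Ioo 0 d, deriv φ x ^ 2 = 2 * (F (φ x) + E) := by
  have hderiv (x : ℝ) (hx : x ∈ Ioo 0 d) :
      HasDerivAt (fun x => deriv φ x ^ 2 / 2 - F (φ x)) 0 x := by
    convert! (((hφ.hasDerivAt_deriv hx).pow 2).div_const 2).sub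
      ((hF _ (hφ.mapsTo_Ioo hx)).comp x (hφ.hasDerivAt hx)) using 1
    ring
  obtain ⟨E, hE⟩ := isOpen_Ioo.exists_is_const_of_deriv_eq_zero isPreconnected_Ioo
    (fun x hx => (hderiv x hx).differentiableAt.differentiableWithinAt)
    fun x hx => (hderiv x hx).deriv
  exact ⟨E, fun x hx => by linarith [hE x hx]⟩

theorem potential_zero_add_nonneg (hφ : IsBVPSol Q f d φ) (hd : 0 < d) (hF : ContinuousAt F 0)
    (hE : ∀ x ∈ Ioo 0 d, deriv φ x ^ 2 = 2 * (F (φ x) + E)) : 0 ≤ F 0 + E := by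
  obtain ⟨hC1, -, -, hφ0, -⟩ := hφ
  have hFφ : ContinuousWithinAt (fun x => F (φ x) + E) (Ioo 0 d) 0 := by
    refine ContinuousWithinAt.add ?_ continuousWithinAt_const
    exact (hφ0.symm ▸ hF).comp_continuousWithinAt
      ((hC1.continuousOn 0 (left_mem_Icc.2 hd.le)).mono Ioo_subset_Icc_self)
  have : (nhdsWithin 0 (Ioo 0 d)).NeBot := left_nhdsWithin_Ioo_neBot hd
  rw [← hφ0]
  refine ge_of_tendsto hFφ ?_
  filter_upwards [self_mem_nhdsWithin] with x hx
  linarith [hE x hx, sq_nonneg (deriv φ x)]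

theorem deriv_pos_of_ne_zero (hφ : IsBVPSol Q f d φ) (hne : ∀ x ∈ Ioo 0 d, deriv φ x ≠ 0)
    (hx : x ∈ Ioo 0 d) : 0 < deriv φ x := by
  refine (hasDerivWithinAt_forall_lt_or_forall_gt_of_forall_ne (convex_Ioo 0 d)
    (fun x hx => (hφ.hasDerivAt hx).hasDerivWithinAt) hne).resolve_left (fun hneg => ?_) x hx
  have hanti : StrictAntiOn φ (Icc 0 d) :=
    strictAntiOn_of_deriv_neg (convex_Icc 0 d) hφ.1.continuousOn (by rwa [interior_Icc])
  have hlt : φ x < φ 0 := hanti (left_mem_Icc.2 (hx.1.trans hx.2).le) (Ioo_subset_Icc_self hx) hx.1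
  have hφ0 : φ 0 = 0 := hφ.2.2.2.1
  linarith [(hφ.mapsTo_Ioo hx).1]

theorem exists_deriv_eq_sqrt (hφ : IsBVPSol Q f d φ) (hd : 0 < d) (hF : IsWellPotential Q f F) :
    ∃ E, (∀ u, 0 ≤ F u + E) ∧
      ∀ x ∈ Ioo 0 d, 0 < deriv φ x ∧ deriv φ x = √(2 * (F (φ x) + E)) := by
  obtain ⟨E, hE⟩ := hφ.exists_deriv_sq_eq hF.hasDerivAt
  have hE0 : 0 ≤ F 0 + E := hφ.potential_zero_add_nonneg hd hF.continuous.continuousAt hE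
  have hne (x : ℝ) (hx : x ∈ Ioo 0 d) : deriv φ x ≠ 0 := by
    refine pow_ne_zero_iff two_ne_zero |>.1 (ne_of_gt ?_)
    linarith [hE x hx, hF.apply_zero_lt _ (hφ.mapsTo_Ioo hx)]
  refine ⟨E, fun u => by linarith [hF.apply_zero_le u], fun x hx => ?_⟩
  have hpos := hφ.deriv_pos_of_ne_zero hne hx
  exact ⟨hpos, by rw [← hE x hx, Real.sqrt_sq hpos.le]⟩

end IsBVPSol

theorem stmt14_general {Q d d' d'' : ℝ} {f F φ : ℝ → ℝ} (hF : IsWellPotential Q f F)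
    (hφ : IsBVPSol Q f d φ) (hd' : 0 ≤ d') (hd'd'' : d' < d'') (hd'' : d'' ≤ d)
    (ψ g : ℝ → ℝ) (hg2 : IntegrableOn (fun s => g s ^ 2) (Icc d' d''))
    (hψ : ∀ x ∈ Icc d' d'', ψ x = ψ d' + ∫ s in d'..x, g s)
    (hψd' : ψ d' = φ d') (hψd'' : ψ d'' = φ d'') :
    ∫ s in d'..d'', (deriv φ s ^ 2 / 2 + F (φ s)) ≤ ∫ s in d'..d'', (g s ^ 2 / 2 + F (ψ s)) := by
  have hd : 0 < d := by linarith
  obtain ⟨E, hFE, hφ'⟩ := hφ.exists_deriv_eq_sqrt hd hF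
  have hIcc : uIcc d' d'' = Icc d' d'' := uIcc_of_le hd'd''.le
  have hsub : Icc d' d'' ⊆ Icc 0 d := Icc_subset_Icc hd' hd''
  have hφ_ac : AbsolutelyContinuousOnInterval φ d' d'' :=
    (hφ.1.mono (hIcc ▸ hsub)).absolutelyContinuousOnInterval
  have hφ_deriv : ∀ᵐ x, x ∈ uIoc d' d'' → HasDerivAt φ (√(2 * (F (φ x) + E))) x := by
    filter_upwards [Measure.ae_ne volume d''] with x hne hx
    rw [uIoc_of_le hd'd''.le] at hx
    have hx' : x ∈ Ioo 0 d := ⟨hd'.trans_lt hx.1, (hx.2.lt_of_ne hne).trans_le hd''⟩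
    exact (hφ' x hx').2 ▸ hφ.hasDerivAt hx'
  have hmono : StrictMonoOn φ (Icc 0 d) :=
    strictMonoOn_of_deriv_pos (convex_Icc 0 d) hφ.1.continuousOn fun x hx =>
      (hφ' x (interior_Icc.subset hx)).1
  have hlt : φ d' < φ d'' :=
    hmono (hsub (left_mem_Icc.2 hd'd''.le)) (hsub (right_mem_Icc.2 hd'd''.le)) hd'd''
  have hg : IntervalIntegrable g volume d' d'' := by
    by_contra hng
    -- The integral of `g` takes the junk value `0`, forcing `ψ d' = ψ d''`.
    have := hψ d'' (right_mem_Icc.2 hd'd''.le)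
    rw [intervalIntegral.integral_undef hng] at this
    linarith
  rw [integral_energy_eq_integral_sqrt_sub hF.continuous hFE hφ_ac hφ_deriv, ← hψd', ← hψd'']
  rw [← hIcc] at hψ
  exact integral_sqrt_sub_le_integral_energy hF.continuous hFE hd'd''.le
    (absolutelyContinuousOnInterval_of_eq_add_integral hg hψ)
    (ae_hasDerivAt_of_eq_add_integral hg hψ)
    ((intervalIntegrable_iff_integrableOn_Icc_of_le hd'd''.le).2 hg2)

section TruncatedPotential

/-- The primitive vanishing at `0` of the extension by zero of `f` outside `[0, Q]`, which is the
potential of the force `f`. -/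
def truncatedPotential (Q : ℝ) (f : ℝ → ℝ) (t : ℝ) : ℝ :=
  ∫ s in (0 : ℝ)..t, indicator (Icc 0 Q) f s

variable {Q t u : ℝ} {f : ℝ → ℝ}

theorem truncatedPotential_zero : truncatedPotential Q f 0 = 0 :=
  intervalIntegral.integral_same

theorem truncatedPotential_of_nonpos (hu : u ≤ 0) : truncatedPotential Q f u = 0 := by
  have hzero : (uIoo 0 u).EqOn (indicator (Icc 0 Q) f) fun _ => 0 := fun s hs => by
    rw [uIoo_of_ge hu] at hs
    exact indicator_of_notMem (fun h => hs.2.not_ge h.1) f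
  rw [truncatedPotential, intervalIntegral.integral_congr_uIoo hzero,
    intervalIntegral.integral_zero]

theorem integrable_indicator_Icc_of_continuousOn {a b : ℝ} (hf : ContinuousOn f (Icc a b)) :
    Integrable (indicator (Icc a b) f) :=
  (hf.integrableOn_compact isCompact_Icc).integrable_indicator measurableSet_Icc

theorem truncatedPotential_of_ge (hf : ContinuousOn f (Icc 0 Q)) (hu : Q ≤ u) :
    truncatedPotential Q f u = truncatedPotential Q f Q := by
  have hint := integrable_indicator_Icc_of_continuousOn hf
  have hzero : (uIoo Q u).EqOn (indicator (Icc 0 Q) f) fun _ => 0 := fun s hs => by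
    rw [uIoo_of_le hu] at hs
    exact indicator_of_notMem (fun h => hs.1.not_ge h.2) f
  rw [truncatedPotential, truncatedPotential, ← sub_eq_zero,
    intervalIntegral.integral_interval_sub_left hint.intervalIntegrable hint.intervalIntegrable,
    intervalIntegral.integral_congr_uIoo hzero, intervalIntegral.integral_zero]

theorem continuous_truncatedPotential (hf : ContinuousOn f (Icc 0 Q)) :
    Continuous (truncatedPotential Q f) :=
  intervalIntegral.continuous_primitive
    (fun _ _ => (integrable_indicator_Icc_of_continuousOn hf).intervalIntegrable) 0

theorem hasDerivAt_truncatedPotential (hf : ContinuousOn f (Icc 0 Q)) (hu : u ∈ Ioo 0 Q) :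
    HasDerivAt (truncatedPotential Q f) (f u) u := by
  have hint := integrable_indicator_Icc_of_continuousOn hf
  have hnhds : Icc 0 Q ∈ nhds u := Icc_mem_nhds hu.1 hu.2
  have hcont : ContinuousAt (indicator (Icc 0 Q) f) u :=
    (hf.continuousAt hnhds).congr
      (Filter.mem_of_superset hnhds fun s hs => (indicator_of_mem hs f).symm)
  rw [← indicator_of_mem (Ioo_subset_Icc_self hu) f]
  exact intervalIntegral.integral_hasDerivAt_right hint.intervalIntegrable
    hint.aestronglyMeasurable.stronglyMeasurableAtFilter hcont

theorem truncatedPotential_nonneg (hQ : 0 < Q) (hf : ContinuousOn f (Icc 0 Q))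
    (hpos : ∀ u ∈ Ioo 0 Q, 0 < truncatedPotential Q f u) (u : ℝ) :
    0 ≤ truncatedPotential Q f u := by
  rcases le_total u 0 with hu0 | hu0
  · exact (truncatedPotential_of_nonpos hu0).ge
  have hIcc : Icc 0 Q ⊆ {u | 0 ≤ truncatedPotential Q f u} := by
    rw [← closure_Ioo hQ.ne]
    exact closure_minimal (fun u hu => (hpos u hu).le)
      (isClosed_le continuous_const (continuous_truncatedPotential hf))
  rcases le_total u Q with huQ | huQ
  · exact hIcc ⟨hu0, huQ⟩
  · rw [truncatedPotential_of_ge hf huQ]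
    exact hIcc (right_mem_Icc.2 hQ.le)

theorem isWellPotential_truncatedPotential (hQ : 0 < Q) (hf : ContinuousOn f (Icc 0 Q))
    (hpos : ∀ u ∈ Ioo 0 Q, 0 < truncatedPotential Q f u) :
    IsWellPotential Q f (truncatedPotential Q f) where
  continuous := continuous_truncatedPotential hf
  hasDerivAt _ hu := hasDerivAt_truncatedPotential hf hu
  apply_zero_le u := truncatedPotential_zero.trans_le (truncatedPotential_nonneg hQ hf hpos u)
  apply_zero_lt u hu := truncatedPotential_zero.trans_lt (hpos u hu)

end TruncatedPotential

theorem continuousOn_image_of_continuousOn_comp {X Y Z : Type*} [TopologicalSpace X]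
    [TopologicalSpace Y] [T2Space Y] [TopologicalSpace Z] {s : Set X} {p : X → Y} {f : Y → Z}
    (hs : IsCompact s) (hp : ContinuousOn p s) (hf : ContinuousOn (f ∘ p) s) :
    ContinuousOn f (p '' s) := by
  refine continuousOn_iff_isClosed.2 fun C hC => ?_
  obtain ⟨u, hu, hCu⟩ := continuousOn_iff_isClosed.1 hf C hC
  have hcompact : IsCompact (p '' (s ∩ u)) :=
    (hs.inter_right hu).image_of_continuousOn (hp.mono inter_subset_left)
  refine ⟨p '' (s ∩ u), hcompact.isClosed, ?_⟩
  rw [inter_eq_self_of_subset_left (image_mono inter_subset_left), inter_comm s u, ← hCu,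
    preimage_comp, inter_comm, inter_comm (p ⁻¹' _), image_inter_preimage]

section Smoothstep

/-- The profile `φ̄₁`: the cubic joining `0` at `t = 0` to `Q` at `t = 1` with horizontal tangents
at both ends. -/
def smoothstep (Q t : ℝ) : ℝ :=
  Q * (3 * t ^ 2 - 2 * t ^ 3)

variable {Q t u : ℝ} {f : ℝ → ℝ}

theorem smoothstep_zero : smoothstep Q 0 = 0 := by
  simp [smoothstep]

theorem smoothstep_one : smoothstep Q 1 = Q := by
  norm_num [smoothstep]

theorem hasDerivAt_smoothstep : HasDerivAt (smoothstep Q) (6 * Q * (t * (1 - t))) t := by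
  convert! (((hasDerivAt_pow 2 t).const_mul 3).sub ((hasDerivAt_pow 3 t).const_mul 2)).const_mul Q
    using 1
  push_cast
  ring

theorem continuous_smoothstep : Continuous (smoothstep Q) :=
  continuous_iff_continuousAt.2 fun _ => hasDerivAt_smoothstep.continuousAt

theorem image_smoothstep_Icc (hQ : 0 ≤ Q) : smoothstep Q '' Icc 0 1 = Icc 0 Q := by
  have hmono : MonotoneOn (smoothstep Q) (Icc 0 1) := by
    refine monotoneOn_of_hasDerivWithinAt_nonneg (convex_Icc 0 1) continuous_smoothstep.continuousOn
      (fun t _ => hasDerivAt_smoothstep.hasDerivWithinAt) fun t ht => ?_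
    have ht' := interior_subset ht
    exact mul_nonneg (by positivity) (mul_nonneg ht'.1 (sub_nonneg.2 ht'.2))
  rw [continuous_smoothstep.continuousOn.image_Icc_of_monotoneOn zero_le_one hmono, smoothstep_zero,
    smoothstep_one]

theorem continuousOn_of_apply_smoothstep (hQ : 0 ≤ Q)
    (hf : ∀ t ∈ Icc (0 : ℝ) 1, f (smoothstep Q t) = 6 * Q * (1 - 2 * t)) :
    ContinuousOn f (Icc 0 Q) := by
  rw [← image_smoothstep_Icc hQ]
  refine continuousOn_image_of_continuousOn_comp isCompact_Icc continuous_smoothstep.continuousOn ?_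
  exact ContinuousOn.congr (f := fun t => 6 * Q * (1 - 2 * t)) (by fun_prop) hf

theorem truncatedPotential_smoothstep (hQ : 0 ≤ Q)
    (hf : ∀ t ∈ Icc (0 : ℝ) 1, f (smoothstep Q t) = 6 * Q * (1 - 2 * t)) (ht : t ∈ Icc (0 : ℝ) 1) :
    truncatedPotential Q f (smoothstep Q t) = (6 * Q * (t * (1 - t))) ^ 2 / 2 := by
  have hsub : uIcc 0 t ⊆ Icc 0 1 := uIcc_subset_Icc (left_mem_Icc.2 zero_le_one) ht
  have himage : smoothstep Q '' uIcc 0 t ⊆ Icc 0 Q :=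
    (image_mono hsub).trans (image_smoothstep_Icc hQ).subset
  have hmem : smoothstep Q t ∈ Icc 0 Q := himage (mem_image_of_mem _ right_mem_uIcc)
  have hprim (x : ℝ) : HasDerivAt (fun x => (6 * Q * (x * (1 - x))) ^ 2 / 2)
      (6 * Q * (1 - 2 * x) * (6 * Q * (x * (1 - x)))) x := by
    convert! ((((hasDerivAt_id x).mul ((hasDerivAt_id x).const_sub 1)).const_mul
      (6 * Q)).pow 2).div_const 2 using 1
    simp only [Nat.cast_ofNat, id_eq, Pi.mul_apply, Nat.add_one_sub_one, pow_one, one_mul, mul_neg,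
      mul_one]
    ring
  calc truncatedPotential Q f (smoothstep Q t)
      = ∫ s in smoothstep Q 0..smoothstep Q t, f s := by
        rw [truncatedPotential, smoothstep_zero]
        refine intervalIntegral.integral_congr fun s hs => indicator_of_mem ?_ f
        exact uIcc_subset_Icc (left_mem_Icc.2 hQ) hmem hs
    _ = ∫ x in (0 : ℝ)..t, (f ∘ smoothstep Q) x * (6 * Q * (x * (1 - x))) :=
        (intervalIntegral.integral_comp_mul_deriv'' continuous_smoothstep.continuousOn
          (fun _ _ => hasDerivAt_smoothstep.hasDerivWithinAt) (by fun_prop)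
          ((continuousOn_of_apply_smoothstep hQ hf).mono himage)).symm
    _ = ∫ x in (0 : ℝ)..t, 6 * Q * (1 - 2 * x) * (6 * Q * (x * (1 - x))) :=
        intervalIntegral.integral_congr fun x hx => by
          simp only [Function.comp_apply, hf x (hsub hx)]
    _ = (6 * Q * (t * (1 - t))) ^ 2 / 2 := by
        rw [intervalIntegral.integral_eq_sub_of_hasDerivAt (fun x _ => hprim x)
          (Continuous.intervalIntegrable (by fun_prop) _ _)]
        simp

theorem truncatedPotential_pos_of_apply_smoothstep
    (hf : ∀ t ∈ Icc (0 : ℝ) 1, f (smoothstep Q t) = 6 * Q * (1 - 2 * t)) (hu : u ∈ Ioo 0 Q) :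
    0 < truncatedPotential Q f u := by
  have hQ : 0 < Q := hu.1.trans hu.2
  obtain ⟨t, ht, rfl⟩ := (image_smoothstep_Icc hQ.le).superset (Ioo_subset_Icc_self hu)
  have ht0 : t ≠ 0 := by
    rintro rfl
    exact hu.1.ne' smoothstep_zero
  have ht1 : t ≠ 1 := by
    rintro rfl
    exact hu.2.ne smoothstep_one
  have : 1 - t ≠ 0 := sub_ne_zero.2 ht1.symm
  rw [truncatedPotential_smoothstep hQ.le hf ht]
  positivity

end Smoothstep

/-- `φ̄_d` is a local energy minimizer: for `0 < d' < d'' < d` and any absolutely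
continuous competitor `ψ` on `[d',d'']` (indefinite integral of `g ∈ L²(d',d'')`)
with the same boundary values, the energy of `φ̄_d` on `(d',d'')` is no larger. -/
theorem stmt14
    (Q : ℝ) (hQ : 0 < Q)
    (κ : ℝ → ℝ) (hκ : ∀ t ∈ Set.Icc (0 : ℝ) 1, κ (Q * (3 * t ^ 2 - 2 * t ^ 3)) = t)
    (f : ℝ → ℝ) (hf : ∀ s : ℝ, f s = 6 * Q * (1 - 2 * κ s))
    (F : ℝ → ℝ) (hF : ∀ t : ℝ, F t = ∫ s in (0 : ℝ)..t, Set.indicator (Set.Icc 0 Q) f s)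
    (d : ℝ) (hd : d ∈ Set.Ioc (0 : ℝ) 1)
    (φd : ℝ → ℝ) (hφd : IsBVPSol Q f d φd)
    (d' d'' : ℝ) (hd' : 0 < d') (hd'd'' : d' < d'') (hd'' : d'' < d) :
    ∀ ψ g : ℝ → ℝ,
      MeasureTheory.IntegrableOn (fun s => (g s) ^ 2) (Set.Icc d' d'') volume →
      (∀ x ∈ Set.Icc d' d'', ψ x = ψ d' + ∫ s in d'..x, g s) →
      ψ d' = φd d' → ψ d'' = φd d'' →
      (∫ s in d'..d'', ((deriv φd s) ^ 2 / 2 + F (φd s))) ≤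
        ∫ s in d'..d'', ((g s) ^ 2 / 2 + F (ψ s)) := by
  obtain rfl : F = truncatedPotential Q f := funext hF
  have hforce : ∀ t ∈ Icc (0 : ℝ) 1, f (smoothstep Q t) = 6 * Q * (1 - 2 * t) :=
    fun t ht => by rw [hf, smoothstep, hκ t ht]
  exact stmt14_general (isWellPotential_truncatedPotential hQ
    (continuousOn_of_apply_smoothstep hQ.le hforce)
    fun _ => truncatedPotential_pos_of_apply_smoothstep hforce) hφd hd'.le hd'd'' hd''.le
end
end

section
/- Let d∈(0,1]. For every ε>0 there exists σ>0 such that every ψ∈U_d with sup_{x₂∈[0,d]}|ψ(x₂)−φ̄_d(x₂)|>ε satisfies J_d(ψ) ≥ J_d(φ̄_d)+σ. -/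
open Real Set MeasureTheory

noncomputable section

/-- `ψ ∈ U_d` with a.e. derivative `g`. -/
def UdRep (Q d : ℝ) (ψ g : ℝ → ℝ) : Prop :=
  MeasureTheory.IntegrableOn (fun s => (g s) ^ 2) (Set.Icc (0 : ℝ) d) volume ∧
  (∀ x ∈ Set.Icc (0 : ℝ) d, ψ x = ∫ s in (0 : ℝ)..x, g s) ∧ ψ d = Q

/-- The energy `J_d(ψ) = ∫₀^d (|ψ'|²/2 + F(ψ))` computed with a.e. derivative `g`. -/
def Jd (F : ℝ → ℝ) (d : ℝ) (ψ g : ℝ → ℝ) : ℝ :=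
  ∫ s in (0 : ℝ)..d, ((g s) ^ 2 / 2 + F (ψ s))

open Filter Topology

/-!
By energy conservation `φ̄_d` solves `φ' = p_c(φ)` with `p_c = √(2 (F + c))` for some `c` with
`F + c ≥ 0`. For `η > 0` the field `p = p_{c+η}` is bounded below by `√(2 η)`, and expanding
`(ψ' - p(ψ))²` shows that on `U_d` the energy `J_d` is a constant plus half of the defect
`D_η(ψ) = ∫₀^d (ψ' - p(ψ))²`. The defect controls the discrepancy between `x` and the time
`∫₀^{ψ(x)} 1/p` in which the flow of `p` reaches `ψ(x)`; comparing `ψ` with `φ̄_d` gives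
`η |ψ(x) - φ̄_d(x)|² ≤ C (D_η(ψ) + D_η(φ̄_d))`, with `C` independent of `η` as long as `ψ(x)` stays
in a fixed bounded set. Since `D_η(φ̄_d) = o(η)`, a small fixed `η` makes the energy gap positive.
The regularisation by `η` is needed because `1/p_c` may fail to be integrable.
-/

section RealAnalysis

lemma sq_sqrt_add_sub_sqrt_le {a h : ℝ} (ha : 0 ≤ a) (hh : 0 ≤ h) : (√(a + h) - √a) ^ 2 ≤ h := by
  have hle : √a ≤ √(a + h) := Real.sqrt_le_sqrt (by linarith)
  nlinarith [Real.sq_sqrt ha, Real.sq_sqrt (add_nonneg ha hh), Real.sqrt_nonneg a]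

lemma mul_sq_sqrt_add_sub_sqrt_le {a h : ℝ} (ha : 0 ≤ a) (hh : 0 ≤ h) :
    a * (√(a + h) - √a) ^ 2 ≤ h ^ 2 := by
  have hle : √a ≤ √(a + h) := Real.sqrt_le_sqrt (by linarith)
  calc a * (√(a + h) - √a) ^ 2 = (√a * (√(a + h) - √a)) ^ 2 := by
        rw [mul_pow, Real.sq_sqrt ha]
    _ ≤ ((√(a + h) + √a) * (√(a + h) - √a)) ^ 2 := by
        have := Real.sqrt_nonneg (a + h)
        gcongr
        linarith
    _ = h ^ 2 := by
        rw [← sq_sub_sq, Real.sq_sqrt ha, Real.sq_sqrt (add_nonneg ha hh), add_sub_cancel_left]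

lemma sq_intervalIntegral_le {w : ℝ → ℝ} {a b : ℝ} (hab : a ≤ b)
    (hw : IntervalIntegrable w volume a b)
    (hw2 : IntervalIntegrable (fun s => w s ^ 2) volume a b) :
    (∫ s in a..b, w s) ^ 2 ≤ (b - a) * ∫ s in a..b, w s ^ 2 := by
  rcases hab.eq_or_lt with rfl | hlt
  · simp
  set I := ∫ s in a..b, w s
  have hexpand : ∫ s in a..b, ((b - a) * w s - I) ^ 2
      = (b - a) * ((b - a) * (∫ s in a..b, w s ^ 2) - I ^ 2) := by
    calc ∫ s in a..b, ((b - a) * w s - I) ^ 2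
        = ∫ s in a..b, ((b - a) ^ 2 * w s ^ 2 - 2 * (b - a) * I * w s + I ^ 2) := by
          congr! 2; ring
      _ = (b - a) ^ 2 * (∫ s in a..b, w s ^ 2) - 2 * (b - a) * I * I + (b - a) * I ^ 2 := by
          rw [intervalIntegral.integral_add ((hw2.const_mul _).sub (hw.const_mul _)) (by simp),
            intervalIntegral.integral_sub (hw2.const_mul _) (hw.const_mul _),
            intervalIntegral.integral_const_mul, intervalIntegral.integral_const_mul,
            intervalIntegral.integral_const, smul_eq_mul]
      _ = _ := by ring
  have hnonneg : 0 ≤ (b - a) * ((b - a) * (∫ s in a..b, w s ^ 2) - I ^ 2) :=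
    hexpand ▸ intervalIntegral.integral_nonneg hab fun s _ => sq_nonneg _
  linarith [nonneg_of_mul_nonneg_right hnonneg (sub_pos.2 hlt)]

lemma absolutelyContinuousOnInterval_comp_of_lipschitzOnWith {X Y : Type*} [PseudoMetricSpace X]
    [PseudoMetricSpace Y] {G : X → Y} {u : ℝ → X} {K : NNReal} {S : Set X} {a b : ℝ}
    (hG : LipschitzOnWith K G S) (hu : AbsolutelyContinuousOnInterval u a b)
    (hS : MapsTo u (uIcc a b) S) :
    AbsolutelyContinuousOnInterval (fun s => G (u s)) a b := by
  have hbound := Tendsto.const_mul (K : ℝ) hu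
  rw [mul_zero] at hbound
  refine squeeze_zero' (Eventually.of_forall fun E => Finset.sum_nonneg fun i _ => dist_nonneg)
    ?_ hbound
  filter_upwards [mem_inf_of_right (mem_principal_self _)] with E hE
  rw [Finset.mul_sum]
  exact Finset.sum_le_sum fun i hi =>
    hG.dist_le_mul _ (hS (hE.1 i hi).1) _ (hS (hE.1 i hi).2)

lemma integral_comp_mul_deriv_of_absolutelyContinuousOnInterval {u p : ℝ → ℝ} {a b : ℝ}
    (hu : AbsolutelyContinuousOnInterval u a b) (hp : Continuous p) :
    ∫ s in a..b, p (u s) * deriv u s = ∫ t in u a..u b, p t := by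
  set G : ℝ → ℝ := fun t => ∫ r in u a..t, p r
  have hG : ∀ t, HasDerivAt G (p t) t := fun t => hp.integral_hasStrictDerivAt _ t |>.hasDerivAt
  have hGsmooth : ContDiff ℝ 1 G := contDiff_one_iff_deriv.2
    ⟨fun t => (hG t).differentiableAt, by rwa [show deriv G = p from funext fun t => (hG t).deriv]⟩
  obtain ⟨C, hC⟩ := hu.exists_bound
  obtain ⟨K, hK⟩ := hGsmooth.contDiffOn.exists_lipschitzOnWith one_ne_zero
    (convex_Icc (-C) C) isCompact_Icc
  have hGu := absolutelyContinuousOnInterval_comp_of_lipschitzOnWith hK hu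
    fun s hs => abs_le.1 (hC s hs)
  calc ∫ s in a..b, p (u s) * deriv u s = ∫ s in a..b, deriv (fun s => G (u s)) s := by
        refine intervalIntegral.integral_congr_ae ?_
        filter_upwards [hu.ae_differentiableAt] with s hs hsab
        exact ((hG (u s)).comp s (hs (uIoc_subset_uIcc hsab)).hasDerivAt).deriv.symm
    _ = ∫ t in u a..u b, p t := by simp [hGu.integral_deriv_eq_sub, G]

lemma deriv_pos_of_forall_deriv_ne_zero {φ : ℝ → ℝ} {a b : ℝ} (hab : a < b)
    (hc : ContinuousOn φ (Icc a b)) (hφ : φ a < φ b) (hne : ∀ x ∈ Ioo a b, deriv φ x ≠ 0) :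
    ∀ x ∈ Ioo a b, 0 < deriv φ x := by
  have hdiff : ∀ x ∈ Ioo a b, HasDerivWithinAt φ (deriv φ x) (Ioo a b) x := fun x hx =>
    (differentiableAt_of_deriv_ne_zero (hne x hx)).hasDerivAt.hasDerivWithinAt
  refine (hasDerivWithinAt_forall_lt_or_forall_gt_of_forall_ne (convex_Ioo a b) hdiff
    hne).resolve_left fun hneg => ?_
  have hanti : StrictAntiOn φ (Icc a b) :=
    strictAntiOn_of_deriv_neg (convex_Icc a b) hc (by rwa [interior_Icc])
  exact hφ.not_gt (hanti (left_mem_Icc.2 hab.le) (right_mem_Icc.2 hab.le) hab)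

lemma continuousOn_image_of_comp {X Y Z : Type*} [TopologicalSpace X] [TopologicalSpace Y]
    [T2Space Y] [TopologicalSpace Z] {q : X → Y} {f : Y → Z} {K : Set X} (hK : IsCompact K)
    (hq : ContinuousOn q K) (hfq : ContinuousOn (f ∘ q) K) : ContinuousOn f (q '' K) := by
  rw [continuousOn_iff_isClosed] at hfq ⊢
  intro A hA
  obtain ⟨C, hC, hAC⟩ := hfq A hA
  refine ⟨q '' (K ∩ C),
    ((hK.inter_right hC).image_of_continuousOn (hq.mono inter_subset_left)).isClosed, ?_⟩
  rw [inter_comm K, ← hAC, inter_eq_left.2 (image_mono inter_subset_right), preimage_comp,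
    inter_comm, inter_comm (q ⁻¹' _), image_inter_preimage]

end RealAnalysis

namespace UdRep

variable {Q d x : ℝ} {p ψ g : ℝ → ℝ}

lemma apply_zero (h : UdRep Q d ψ g) (hd : 0 ≤ d) : ψ 0 = 0 := by
  rw [h.2.1 0 ⟨le_rfl, hd⟩, intervalIntegral.integral_same]

-- If `g` were not integrable, its Bochner integral `ψ d = Q` would take the junk value `0`.
lemma intervalIntegrable (h : UdRep Q d ψ g) (hQ : Q ≠ 0) (hd : 0 ≤ d) :
    IntervalIntegrable g volume 0 d := by
  by_contra hg
  exact hQ (by rw [← h.2.2, h.2.1 d ⟨hd, le_rfl⟩, intervalIntegral.integral_undef hg])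

lemma absolutelyContinuousOnInterval_primitive (h : UdRep Q d ψ g) (hQ : Q ≠ 0) (hd : 0 ≤ d) :
    AbsolutelyContinuousOnInterval (fun y => ∫ s in (0 : ℝ)..y, g s) 0 d :=
  (h.intervalIntegrable hQ hd).absolutelyContinuousOnInterval_intervalIntegral left_mem_uIcc

lemma continuousOn (h : UdRep Q d ψ g) (hQ : Q ≠ 0) (hd : 0 ≤ d) : ContinuousOn ψ (Icc 0 d) := by
  have hprim := (h.absolutelyContinuousOnInterval_primitive hQ hd).continuousOn
  rw [uIcc_of_le hd] at hprim
  exact hprim.congr h.2.1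

lemma ae_deriv_primitive_eq (h : UdRep Q d ψ g) (hQ : Q ≠ 0) (hd : 0 ≤ d) :
    ∀ᵐ y, y ∈ Icc 0 d → deriv (fun y => ∫ s in (0 : ℝ)..y, g s) y = g y := by
  filter_upwards [(h.intervalIntegrable hQ hd).ae_hasDerivAt_integral] with y hy hyI
  exact (hy (by rwa [uIcc_of_le hd]) 0 left_mem_uIcc).deriv

lemma ae_deriv_eq (h : UdRep Q d ψ g) (hQ : Q ≠ 0) (hd : 0 ≤ d) :
    ∀ᵐ y, y ∈ Ioo 0 d → deriv ψ y = g y := by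
  filter_upwards [h.ae_deriv_primitive_eq hQ hd] with y hy hyI
  rw [← hy (Ioo_subset_Icc_self hyI)]
  exact EventuallyEq.deriv_eq <| eventually_of_mem (isOpen_Ioo.mem_nhds hyI) fun z hz =>
    h.2.1 z (Ioo_subset_Icc_self hz)

lemma integral_comp_mul (h : UdRep Q d ψ g) (hQ : Q ≠ 0) (hp : Continuous p)
    (hx : x ∈ Icc 0 d) : ∫ s in (0 : ℝ)..x, p (ψ s) * g s = ∫ t in (0 : ℝ)..ψ x, p t := by
  have hd : 0 ≤ d := hx.1.trans hx.2
  have hsub : uIcc 0 x ⊆ Icc 0 d := by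
    rw [uIcc_of_le hx.1]; exact Icc_subset_Icc_right hx.2
  have hac := (h.absolutelyContinuousOnInterval_primitive hQ hd).mono
    (hsub.trans_eq (uIcc_of_le hd).symm)
  have hsubst := integral_comp_mul_deriv_of_absolutelyContinuousOnInterval hac hp
  rw [intervalIntegral.integral_same, ← h.2.1 x hx] at hsubst
  rw [← hsubst]
  refine intervalIntegral.integral_congr_ae ?_
  filter_upwards [h.ae_deriv_primitive_eq hQ hd] with s hs hsx
  have hsI : s ∈ Icc 0 d := hsub (uIoc_subset_uIcc hsx)
  rw [hs hsI, h.2.1 s hsI]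

lemma continuousOn_comp (h : UdRep Q d ψ g) (hQ : Q ≠ 0) (hd : 0 ≤ d) (hp : Continuous p) :
    ContinuousOn (fun s => p (ψ s)) (uIcc 0 d) := by
  rw [uIcc_of_le hd]
  exact hp.comp_continuousOn (h.continuousOn hQ hd)

lemma intervalIntegrable_comp_mul (h : UdRep Q d ψ g) (hQ : Q ≠ 0) (hd : 0 ≤ d)
    (hp : Continuous p) : IntervalIntegrable (fun s => p (ψ s) * g s) volume 0 d :=
  (h.intervalIntegrable hQ hd).continuousOn_mul (h.continuousOn_comp hQ hd hp)

lemma intervalIntegrable_sub_comp (h : UdRep Q d ψ g) (hQ : Q ≠ 0) (hd : 0 ≤ d)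
    (hp : Continuous p) : IntervalIntegrable (fun s => g s - p (ψ s)) volume 0 d :=
  (h.intervalIntegrable hQ hd).sub (h.continuousOn_comp hQ hd hp).intervalIntegrable

lemma intervalIntegrable_sq_sub_comp (h : UdRep Q d ψ g) (hQ : Q ≠ 0) (hd : 0 ≤ d)
    (hp : Continuous p) : IntervalIntegrable (fun s => (g s - p (ψ s)) ^ 2) volume 0 d := by
  have hgsq : IntervalIntegrable (fun s => g s ^ 2) volume 0 d :=
    (intervalIntegrable_iff_integrableOn_Icc_of_le hd).2 h.1
  have hsum := (hgsq.sub ((h.intervalIntegrable_comp_mul hQ hd hp).const_mul 2)).add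
    (h.continuousOn_comp hQ hd (hp.pow 2)).intervalIntegrable
  refine hsum.congr fun s _ => ?_
  simp only [Pi.pow_apply]
  ring

end UdRep

/-- The squared `L²` defect of `ψ`, with a.e. derivative `g`, as a solution of the autonomous
equation `ψ' = p(ψ)` on `[0, d]`. -/
def speedDefect (p : ℝ → ℝ) (d : ℝ) (ψ g : ℝ → ℝ) : ℝ :=
  ∫ s in (0 : ℝ)..d, (g s - p (ψ s)) ^ 2

/-- The time in which the flow of `ψ' = p(ψ)` travels from `0` to `t`, for a positive speed `p`;
it is negative for `t < 0`. -/
def travelTime (p : ℝ → ℝ) (t : ℝ) : ℝ := ∫ u in (0 : ℝ)..t, (p u)⁻¹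

/-- The speed of an orbit of energy `c` in the potential `-F`, obtained from the conservation law
`ψ'² / 2 - F(ψ) = c`. -/
def orbitSpeed (F : ℝ → ℝ) (c t : ℝ) : ℝ := √(2 * (F t + c))

section TravelTime

variable {Q d m B x : ℝ} {p φ gφ ψ g : ℝ → ℝ}

lemma abs_sub_le_mul_abs_travelTime_sub {a b : ℝ} (hpc : Continuous p) (hp : ∀ t, 0 < p t)
    (hB : ∀ t ∈ uIcc a b, p t ≤ B) :
    |a - b| ≤ B * |travelTime p a - travelTime p b| := by
  wlog hba : b ≤ a generalizing a b
  · rw [abs_sub_comm, abs_sub_comm (travelTime p a)]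
    exact this (by rwa [uIcc_comm]) (not_le.1 hba).le
  have hinv : Continuous fun t => (p t)⁻¹ := hpc.inv₀ fun t => (hp t).ne'
  have hBpos : 0 < B := (hp a).trans_le (hB a left_mem_uIcc)
  have hslow : ∫ _u in b..a, B⁻¹ ≤ ∫ u in b..a, (p u)⁻¹ :=
    intervalIntegral.integral_mono_on hba (by simp) (hinv.intervalIntegrable _ _) fun u hu =>
      inv_anti₀ (hp u) (hB u (by rwa [uIcc_of_ge hba]))
  have htime : travelTime p a - travelTime p b = ∫ u in b..a, (p u)⁻¹ :=
    intervalIntegral.integral_interval_sub_left (hinv.intervalIntegrable _ _)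
      (hinv.intervalIntegrable _ _)
  rw [abs_of_nonneg (sub_nonneg.2 hba), htime]
  calc a - b = B * ∫ _u in b..a, B⁻¹ := by
        rw [intervalIntegral.integral_const, smul_eq_mul]; field_simp
    _ ≤ B * |∫ u in b..a, (p u)⁻¹| := by gcongr; exact hslow.trans (le_abs_self _)

lemma UdRep.travelTime_sub_eq (h : UdRep Q d ψ g) (hQ : Q ≠ 0) (hpc : Continuous p)
    (hp : ∀ t, 0 < p t) (hx : x ∈ Icc 0 d) :
    travelTime p (ψ x) - x = ∫ s in (0 : ℝ)..x, (p (ψ s))⁻¹ * (g s - p (ψ s)) := by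
  have hd : 0 ≤ d := hx.1.trans hx.2
  have hinv : Continuous fun t => (p t)⁻¹ := hpc.inv₀ fun t => (hp t).ne'
  have hint : IntervalIntegrable (fun s => (p (ψ s))⁻¹ * g s) volume 0 x :=
    (h.intervalIntegrable_comp_mul hQ hd hinv).mono_set
      (by rw [uIcc_of_le hx.1, uIcc_of_le hd]; exact Icc_subset_Icc_right hx.2)
  calc travelTime p (ψ x) - x
      = (∫ s in (0 : ℝ)..x, (p (ψ s))⁻¹ * g s) - ∫ _s in (0 : ℝ)..x, (1 : ℝ) := by
        rw [h.integral_comp_mul hQ hinv hx, travelTime]; simp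
    _ = ∫ s in (0 : ℝ)..x, ((p (ψ s))⁻¹ * g s - 1) :=
        (intervalIntegral.integral_sub hint (by simp)).symm
    _ = _ := by
        congr! 2 with s
        rw [mul_sub, inv_mul_cancel₀ (hp _).ne']

lemma sq_mul_sq_inv_mul_le {r : ℝ} (hm : 0 ≤ m) (hmr : m ≤ r) (v : ℝ) :
    m ^ 2 * (r⁻¹ * v) ^ 2 ≤ v ^ 2 := by
  have hratio : m * r⁻¹ ≤ 1 := div_le_one_of_le₀ hmr (hm.trans hmr)
  have hnonneg : 0 ≤ m * r⁻¹ := mul_nonneg hm (inv_nonneg.2 (hm.trans hmr))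
  calc m ^ 2 * (r⁻¹ * v) ^ 2 = (m * r⁻¹) ^ 2 * v ^ 2 := by ring
    _ ≤ v ^ 2 := mul_le_of_le_one_left (sq_nonneg v) (pow_le_one₀ hnonneg hratio)

lemma UdRep.mul_sq_travelTime_sub_le (h : UdRep Q d ψ g) (hQ : Q ≠ 0) (hpc : Continuous p)
    (hm : 0 < m) (hmp : ∀ t, m ≤ p t) (hx : x ∈ Icc 0 d) :
    m ^ 2 * (travelTime p (ψ x) - x) ^ 2 ≤ d * speedDefect p d ψ g := by
  have hd : 0 ≤ d := hx.1.trans hx.2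
  have hp : ∀ t, 0 < p t := fun t => hm.trans_le (hmp t)
  have hinv : Continuous fun t => (p t)⁻¹ := hpc.inv₀ fun t => (hp t).ne'
  have hsub : uIcc 0 x ⊆ uIcc 0 d := by
    rw [uIcc_of_le hx.1, uIcc_of_le hd]; exact Icc_subset_Icc_right hx.2
  set w : ℝ → ℝ := fun s => (p (ψ s))⁻¹ * (g s - p (ψ s))
  have hw : IntervalIntegrable w volume 0 x :=
    ((h.intervalIntegrable_sub_comp hQ hd hpc).continuousOn_mul
      (h.continuousOn_comp hQ hd hinv)).mono_set hsub
  have hD := h.intervalIntegrable_sq_sub_comp hQ hd hpc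
  have hw2 : IntervalIntegrable (fun s => w s ^ 2) volume 0 x := by
    simp only [w, mul_pow]
    exact (hD.continuousOn_mul (h.continuousOn_comp hQ hd (hinv.pow 2))).mono_set hsub
  calc m ^ 2 * (travelTime p (ψ x) - x) ^ 2
      = m ^ 2 * (∫ s in (0 : ℝ)..x, w s) ^ 2 := by rw [h.travelTime_sub_eq hQ hpc hp hx]
    _ ≤ m ^ 2 * (x * ∫ s in (0 : ℝ)..x, w s ^ 2) := by
        gcongr; simpa only [sub_zero] using sq_intervalIntegral_le hx.1 hw hw2
    _ = x * ∫ s in (0 : ℝ)..x, m ^ 2 * w s ^ 2 := by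
        rw [intervalIntegral.integral_const_mul]; ring
    _ ≤ x * ∫ s in (0 : ℝ)..x, (g s - p (ψ s)) ^ 2 :=
        mul_le_mul_of_nonneg_left (intervalIntegral.integral_mono_on hx.1 (hw2.const_mul _)
          (hD.mono_set hsub) fun s _ => sq_mul_sq_inv_mul_le hm.le (hmp _) _) hx.1
    _ ≤ x * speedDefect p d ψ g :=
        mul_le_mul_of_nonneg_left (intervalIntegral.integral_mono_interval le_rfl hx.1 hx.2
          (ae_of_all _ fun s => sq_nonneg _) hD) hx.1
    _ ≤ d * speedDefect p d ψ g :=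
        mul_le_mul_of_nonneg_right hx.2 (intervalIntegral.integral_nonneg hd fun s _ => sq_nonneg _)

lemma UdRep.mul_sq_sub_le (hψ : UdRep Q d ψ g) (hφ : UdRep Q d φ gφ) (hQ : Q ≠ 0)
    (hpc : Continuous p) (hm : 0 < m) (hmp : ∀ t, m ≤ p t) (hx : x ∈ Icc 0 d)
    (hB : ∀ t ∈ uIcc (ψ x) (φ x), p t ≤ B) :
    m ^ 2 * (ψ x - φ x) ^ 2
      ≤ 2 * B ^ 2 * d * (speedDefect p d ψ g + speedDefect p d φ gφ) := by
  set a := travelTime p (ψ x) - x with ha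
  set b := travelTime p (φ x) - x with hb
  have hdist : |ψ x - φ x| ≤ B * |a - b| := by
    rw [ha, hb, sub_sub_sub_cancel_right]
    exact abs_sub_le_mul_abs_travelTime_sub hpc (fun t => hm.trans_le (hmp t)) hB
  have hψa := hψ.mul_sq_travelTime_sub_le hQ hpc hm hmp hx
  have hφb := hφ.mul_sq_travelTime_sub_le hQ hpc hm hmp hx
  have hsum : m ^ 2 * (a - b) ^ 2 ≤ 2 * (m ^ 2 * a ^ 2 + m ^ 2 * b ^ 2) := by
    nlinarith [mul_nonneg (sq_nonneg m) (sq_nonneg (a + b))]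
  calc m ^ 2 * (ψ x - φ x) ^ 2 ≤ m ^ 2 * (B * |a - b|) ^ 2 := by
        rw [← sq_abs (ψ x - φ x)]; gcongr
    _ = B ^ 2 * (m ^ 2 * (a - b) ^ 2) := by rw [mul_pow, sq_abs]; ring
    _ ≤ B ^ 2 * (2 * (d * speedDefect p d ψ g + d * speedDefect p d φ gφ)) :=
        mul_le_mul_of_nonneg_left (by linarith) (sq_nonneg B)
    _ = _ := by ring

end TravelTime

section Energy

variable {Q d c : ℝ} {F p φ ψ g : ℝ → ℝ}

lemma continuous_orbitSpeed (hF : Continuous F) : Continuous (orbitSpeed F c) := by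
  unfold orbitSpeed
  fun_prop

lemma sq_orbitSpeed {t : ℝ} (ht : 0 ≤ F t + c) : orbitSpeed F c t ^ 2 = 2 * (F t + c) :=
  Real.sq_sqrt (by linarith)

lemma orbitSpeed_le_orbitSpeed {c' t : ℝ} (hc : c ≤ c') : orbitSpeed F c t ≤ orbitSpeed F c' t :=
  Real.sqrt_le_sqrt (by linarith)

lemma exists_forall_orbitSpeed_le (hF : Continuous F) (c a b : ℝ) :
    ∃ B > 0, ∀ t ∈ Icc a b, orbitSpeed F c t ≤ B := by
  obtain ⟨B, hB⟩ := isCompact_Icc.bddAbove_image (continuous_orbitSpeed (c := c) hF).continuousOn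
  exact ⟨max B 1, by positivity, fun t ht => le_max_of_le_left (hB (mem_image_of_mem _ ht))⟩

lemma UdRep.Jd_eq (h : UdRep Q d ψ g) (hQ : Q ≠ 0) (hd : 0 ≤ d) (hpc : Continuous p)
    (hpF : ∀ t, p t ^ 2 = 2 * (F t + c)) :
    Jd F d ψ g = (∫ t in (0 : ℝ)..Q, p t) - c * d + speedDefect p d ψ g / 2 := by
  have hpg := h.intervalIntegrable_comp_mul hQ hd hpc
  have hD := h.intervalIntegrable_sq_sub_comp hQ hd hpc
  calc Jd F d ψ g = ∫ s in (0 : ℝ)..d, (p (ψ s) * g s - c + (g s - p (ψ s)) ^ 2 / 2) := by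
        refine intervalIntegral.integral_congr fun s _ => ?_
        linear_combination -hpF (ψ s) / 2
    _ = (∫ s in (0 : ℝ)..d, p (ψ s) * g s) - c * d + speedDefect p d ψ g / 2 := by
        rw [intervalIntegral.integral_add (hpg.sub (by simp)) (hD.div_const 2),
          intervalIntegral.integral_sub hpg (by simp), intervalIntegral.integral_div,
          intervalIntegral.integral_const, smul_eq_mul, sub_zero, mul_comm d c, speedDefect]
    _ = _ := by rw [h.integral_comp_mul hQ hpc ⟨hd, le_rfl⟩, h.2.2]

lemma UdRep.tendsto_speedDefect_orbitSpeed_div (h : UdRep Q d φ g) (hQ : Q ≠ 0) (hd : 0 ≤ d)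
    (hF : Continuous F)
    (horbit : ∀ᵐ s, s ∈ uIoc 0 d → 0 < F (φ s) + c ∧ g s = orbitSpeed F c (φ s)) :
    Tendsto (fun η => speedDefect (orbitSpeed F (c + η)) d φ g / η) (𝓝[>] 0) (𝓝 0) := by
  have hsplit : ∀ η s, orbitSpeed F (c + η) (φ s) = √(2 * (F (φ s) + c) + 2 * η) := fun η s => by
    rw [orbitSpeed]; ring_nf
  suffices hlim : Tendsto (fun η => ∫ s in (0 : ℝ)..d, (g s - orbitSpeed F (c + η) (φ s)) ^ 2 / η)
      (𝓝[>] 0) (𝓝 (∫ _s in (0 : ℝ)..d, (0 : ℝ))) by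
    simpa only [speedDefect, intervalIntegral.integral_div, intervalIntegral.integral_zero]
      using hlim
  refine intervalIntegral.tendsto_integral_filter_of_dominated_convergence (fun _ => 2)
    (Eventually.of_forall fun η => ((h.intervalIntegrable_sq_sub_comp hQ hd
      (continuous_orbitSpeed hF)).div_const η).def'.aestronglyMeasurable) ?_ (by simp) ?_
  · filter_upwards [self_mem_nhdsWithin] with η (hη : 0 < η)
    filter_upwards [horbit] with s hs hsI
    obtain ⟨hpos, hgs⟩ := hs hsI
    rw [Real.norm_of_nonneg (by positivity), div_le_iff₀ hη, hgs, hsplit, ← neg_sub, neg_sq]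
    exact sq_sqrt_add_sub_sqrt_le (by positivity) (by positivity)
  · filter_upwards [horbit] with s hs hsI
    obtain ⟨hpos, hgs⟩ := hs hsI
    have hlin : Tendsto (fun η : ℝ => 2 / (F (φ s) + c) * η) (𝓝[>] 0) (𝓝 0) :=
      ((continuous_const_mul _).tendsto' 0 0 (mul_zero _)).mono_left nhdsWithin_le_nhds
    refine squeeze_zero' ?_ ?_ hlin
    · filter_upwards [self_mem_nhdsWithin] with η (hη : 0 < η)
      positivity
    · filter_upwards [self_mem_nhdsWithin] with η (hη : 0 < η)
      have hsq := mul_sq_sqrt_add_sub_sqrt_le (a := 2 * (F (φ s) + c)) (h := 2 * η)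
        (by positivity) (by positivity)
      rw [hgs, hsplit, ← neg_sub, neg_sq, orbitSpeed, div_mul_eq_mul_div, div_le_div_iff₀ hη hpos]
      linarith

end Energy

namespace IsBVPSol

variable {Q d : ℝ} {f F φ : ℝ → ℝ}

lemma pos (h : IsBVPSol Q f d φ) (hd : 0 < d) : 0 < Q := by
  obtain ⟨-, -, -, -, -, hrange⟩ := h
  obtain ⟨hpos, hlt⟩ := hrange (d / 2) ⟨by linarith, by linarith⟩
  exact hpos.trans hlt

lemma mem_Icc (h : IsBVPSol Q f d φ) (hd : 0 < d) {x : ℝ} (hx : x ∈ Icc 0 d) :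
    φ x ∈ Icc 0 Q := by
  have hQ := (h.pos hd).le
  obtain ⟨-, -, -, hφ0, hφd, hrange⟩ := h
  rcases eq_endpoints_or_mem_Ioo_of_mem_Icc hx with rfl | rfl | hx
  · rw [hφ0]; exact ⟨le_rfl, hQ⟩
  · rw [hφd]; exact ⟨hQ, le_rfl⟩
  · exact Ioo_subset_Icc_self (hrange x hx)

lemma exists_sq_deriv_eq (h : IsBVPSol Q f d φ) (hFd : ∀ t ∈ Ioo 0 Q, HasDerivAt F (f t) t) :
    ∃ c, ∀ x ∈ Ioo 0 d, deriv φ x ^ 2 = 2 * (F (φ x) + c) := by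
  obtain ⟨-, hC2, hode, -, -, hrange⟩ := h
  have hC1 : ContDiffOn ℝ 1 (deriv φ) (Ioo 0 d) := hC2.deriv_of_isOpen isOpen_Ioo (by norm_num)
  have henergy : ∀ x ∈ Ioo 0 d, HasDerivAt (fun x => deriv φ x ^ 2 / 2 - F (φ x)) 0 x := by
    intro x hx
    have hx' := isOpen_Ioo.mem_nhds hx
    have hφ' := ((hC2.differentiableOn two_ne_zero).differentiableAt hx').hasDerivAt
    have hφ'' := ((hC1.differentiableOn one_ne_zero).differentiableAt hx').hasDerivAt
    rw [hode x hx] at hφ''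
    refine (((hφ''.pow 2).div_const 2).sub ((hFd _ (hrange x hx)).comp x hφ')).congr_deriv ?_
    norm_num
    ring
  obtain ⟨c, hc⟩ := isOpen_Ioo.exists_is_const_of_deriv_eq_zero isPreconnected_Ioo
    (fun x hx => (henergy x hx).differentiableAt.differentiableWithinAt)
    fun x hx => (henergy x hx).deriv
  exact ⟨c, fun x hx => by linarith [hc x hx]⟩

lemma exists_deriv_eq_orbitSpeed (h : IsBVPSol Q f d φ) (hd : 0 < d) (hFc : Continuous F)
    (hFlt : ∀ t ∈ Ioo 0 Q, F 0 < F t) (hFd : ∀ t ∈ Ioo 0 Q, HasDerivAt F (f t) t) :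
    ∃ c, 0 ≤ F 0 + c ∧ ∀ x ∈ Ioo 0 d, deriv φ x = orbitSpeed F c (φ x) := by
  obtain ⟨c, hc⟩ := h.exists_sq_deriv_eq hFd
  have hQ := h.pos hd
  obtain ⟨hC1, -, -, hφ0, hφd, hrange⟩ := h
  have hnonneg : 0 ≤ F 0 + c := by
    have hφ : Tendsto φ (𝓝[Ioo 0 d] 0) (𝓝 (φ 0)) :=
      (hC1.continuousOn 0 ⟨le_rfl, hd.le⟩).mono Ioo_subset_Icc_self
    have hlim := ((hFc.tendsto _).comp hφ).add_const c
    rw [hφ0] at hlim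
    have := left_nhdsWithin_Ioo_neBot hd
    refine ge_of_tendsto hlim ?_
    filter_upwards [self_mem_nhdsWithin] with x hx
    have hsq := hc x hx
    simp only [Function.comp_apply]
    linarith [sq_nonneg (deriv φ x)]
  have hne : ∀ x ∈ Ioo 0 d, deriv φ x ≠ 0 := fun x hx h0 => by
    have hsq := hc x hx
    rw [h0] at hsq
    linarith [hFlt _ (hrange x hx)]
  have hpos := deriv_pos_of_forall_deriv_ne_zero hd hC1.continuousOn (by rwa [hφ0, hφd]) hne
  exact ⟨c, hnonneg, fun x hx => by rw [orbitSpeed, ← hc x hx, Real.sqrt_sq (hpos x hx).le]⟩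

end IsBVPSol

section EnergyGap

variable {Q d c η B ε x : ℝ} {f F φ gφ ψ g : ℝ → ℝ}

lemma UdRep.mul_sq_sub_le_speedDefect_orbitSpeed (hψ : UdRep Q d ψ g) (hφ : UdRep Q d φ gφ)
    (hQ : Q ≠ 0) (hF : Continuous F) (hη : 0 < η) (hηF : ∀ t, η ≤ F t + c) (hx : x ∈ Icc 0 d)
    (hB : ∀ t ∈ uIcc (ψ x) (φ x), orbitSpeed F c t ≤ B) :
    η * (ψ x - φ x) ^ 2 ≤ B ^ 2 * d *
      (speedDefect (orbitSpeed F c) d ψ g + speedDefect (orbitSpeed F c) d φ gφ) := by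
  have hdist := hψ.mul_sq_sub_le hφ hQ (continuous_orbitSpeed hF) (m := √(2 * η))
    (Real.sqrt_pos.2 (by linarith)) (fun t => Real.sqrt_le_sqrt (by linarith [hηF t])) hx hB
  rw [Real.sq_sqrt (by linarith)] at hdist
  linarith

lemma UdRep.exists_abs_sub_eq (hψ : UdRep Q d ψ g) (hφ : UdRep Q d φ gφ) (hQ : Q ≠ 0)
    (hε : 0 ≤ ε) (hx : x ∈ Icc 0 d) (hεx : ε ≤ |ψ x - φ x|) :
    ∃ y ∈ Icc 0 d, |ψ y - φ y| = ε := by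
  have hd : 0 ≤ d := hx.1.trans hx.2
  have hcont : ContinuousOn (fun y => |ψ y - φ y|) (Icc 0 x) :=
    ((hψ.continuousOn hQ hd).sub (hφ.continuousOn hQ hd)).abs.mono (Icc_subset_Icc_right hx.2)
  obtain ⟨y, hy, hyε⟩ := intermediate_value_Icc hx.1 hcont
    ⟨by simpa [hψ.apply_zero hd, hφ.apply_zero hd] using hε, hεx⟩
  exact ⟨y, Icc_subset_Icc_right hx.2 hy, hyε⟩

lemma IsBVPSol.exists_ae_eq_orbitSpeed (hφ : IsBVPSol Q f d φ) (hgφ : UdRep Q d φ gφ)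
    (hd : 0 < d) (hFc : Continuous F) (hFlt : ∀ t ∈ Ioo 0 Q, F 0 < F t)
    (hFd : ∀ t ∈ Ioo 0 Q, HasDerivAt F (f t) t) :
    ∃ c, 0 ≤ F 0 + c ∧
      ∀ᵐ s, s ∈ uIoc 0 d → 0 < F (φ s) + c ∧ gφ s = orbitSpeed F c (φ s) := by
  obtain ⟨c, hc, horbit⟩ := hφ.exists_deriv_eq_orbitSpeed hd hFc hFlt hFd
  have hQ := (hφ.pos hd).ne'
  obtain ⟨-, -, -, -, -, hrange⟩ := hφ
  refine ⟨c, hc, ?_⟩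
  filter_upwards [hgφ.ae_deriv_eq hQ hd.le, volume.ae_ne d] with s hs hsd hsI
  rw [uIoc_of_le hd.le] at hsI
  have hsI' : s ∈ Ioo 0 d := ⟨hsI.1, hsI.2.lt_of_ne hsd⟩
  exact ⟨by linarith [hFlt _ (hrange s hsI')], by rw [← hs hsI', horbit s hsI']⟩

end EnergyGap

section Potential

/-- The profile `φ̄₁(t) = Q (3 t² - 2 t³)`. -/
def cubicProfile (Q t : ℝ) : ℝ := Q * (3 * t ^ 2 - 2 * t ^ 3)

/-- The potential `F`: the primitive, vanishing at `0`, of the extension of `f` by zero outside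
`[0, Q]`. -/
def truncatedPrimitive (Q : ℝ) (f : ℝ → ℝ) (t : ℝ) : ℝ :=
  ∫ s in (0 : ℝ)..t, indicator (Icc 0 Q) f s

variable {Q t : ℝ} {f : ℝ → ℝ}

lemma continuous_cubicProfile (Q : ℝ) : Continuous (cubicProfile Q) := by
  unfold cubicProfile
  fun_prop

lemma cubicProfile_zero (Q : ℝ) : cubicProfile Q 0 = 0 := by norm_num [cubicProfile]

lemma cubicProfile_one (Q : ℝ) : cubicProfile Q 1 = Q := by norm_num [cubicProfile]

lemma hasDerivAt_cubicProfile (Q t : ℝ) :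
    HasDerivAt (cubicProfile Q) (6 * Q * (t * (1 - t))) t := by
  refine ((((hasDerivAt_pow 2 t).const_mul 3).sub ((hasDerivAt_pow 3 t).const_mul 2)).const_mul
    Q).congr_deriv ?_
  norm_num
  ring

lemma image_cubicProfile_Icc (hQ : 0 ≤ Q) : cubicProfile Q '' Icc 0 1 = Icc 0 Q := by
  refine Subset.antisymm ?_ ?_
  · rintro _ ⟨t, ⟨ht0, ht1⟩, rfl⟩
    have hlow : 0 ≤ 3 * t ^ 2 - 2 * t ^ 3 := by nlinarith [sq_nonneg t]
    have hhigh : 3 * t ^ 2 - 2 * t ^ 3 ≤ 1 := by nlinarith [sq_nonneg (1 - t)]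
    exact ⟨mul_nonneg hQ hlow, mul_le_of_le_one_right hQ hhigh⟩
  · have hivt := intermediate_value_Icc zero_le_one (continuous_cubicProfile Q).continuousOn
    rwa [cubicProfile_zero, cubicProfile_one] at hivt

lemma continuousOn_of_comp_cubicProfile (hQ : 0 ≤ Q)
    (hf : ∀ t ∈ Icc 0 1, f (cubicProfile Q t) = 6 * Q * (1 - 2 * t)) :
    ContinuousOn f (Icc 0 Q) := by
  rw [← image_cubicProfile_Icc hQ]
  refine continuousOn_image_of_comp isCompact_Icc (continuous_cubicProfile Q).continuousOn ?_
  have hlinear : Continuous fun t => 6 * Q * (1 - 2 * t) := by fun_prop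
  exact hlinear.continuousOn.congr hf

lemma integrable_indicator_Icc (hfc : ContinuousOn f (Icc 0 Q)) :
    Integrable (indicator (Icc 0 Q) f) :=
  (integrable_indicator_iff measurableSet_Icc).2 hfc.integrableOn_Icc

lemma continuous_truncatedPrimitive (hfc : ContinuousOn f (Icc 0 Q)) :
    Continuous (truncatedPrimitive Q f) :=
  (integrable_indicator_Icc hfc).continuous_primitive 0

lemma hasDerivAt_truncatedPrimitive (hfc : ContinuousOn f (Icc 0 Q)) (ht : t ∈ Ioo 0 Q) :
    HasDerivAt (truncatedPrimitive Q f) (f t) t := by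
  have hint := integrable_indicator_Icc hfc
  have hnhds : Icc 0 Q ∈ 𝓝 t := Icc_mem_nhds ht.1 ht.2
  have hcont : ContinuousAt (indicator (Icc 0 Q) f) t := (hfc.continuousAt hnhds).congr <|
    eventuallyEq_of_mem hnhds fun s hs => (indicator_of_mem hs f).symm
  have hderiv := intervalIntegral.integral_hasDerivAt_right (a := 0) hint.intervalIntegrable
    hint.aestronglyMeasurable.stronglyMeasurableAtFilter hcont
  rwa [indicator_of_mem (Ioo_subset_Icc_self ht)] at hderiv

lemma truncatedPrimitive_of_mem (ht : t ∈ Icc 0 Q) :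
    truncatedPrimitive Q f t = ∫ s in (0 : ℝ)..t, f s := by
  refine intervalIntegral.integral_congr fun s hs => indicator_of_mem ?_ f
  rw [uIcc_of_le ht.1] at hs
  exact Icc_subset_Icc_right ht.2 hs

lemma truncatedPrimitive_of_nonpos (ht : t ≤ 0) : truncatedPrimitive Q f t = 0 := by
  refine intervalIntegral.integral_zero_ae ?_
  filter_upwards [volume.ae_ne 0] with s hs0 hs
  rw [uIoc_of_ge ht] at hs
  exact indicator_of_notMem (fun hs' => hs0 (le_antisymm hs.2 hs'.1)) f

lemma truncatedPrimitive_of_ge (hfc : ContinuousOn f (Icc 0 Q)) (ht : Q ≤ t) :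
    truncatedPrimitive Q f t = truncatedPrimitive Q f Q := by
  have hint := integrable_indicator_Icc hfc
  rw [← sub_eq_zero, truncatedPrimitive, truncatedPrimitive,
    intervalIntegral.integral_interval_sub_left hint.intervalIntegrable hint.intervalIntegrable]
  refine intervalIntegral.integral_zero_ae (ae_of_all _ fun s hs => ?_)
  rw [uIoc_of_le ht] at hs
  exact indicator_of_notMem (fun hs' => hs.1.not_ge hs'.2) f

-- `f ∘ φ̄₁ = φ̄₁''`, so `φ̄₁'² / 2 - F(φ̄₁)` is constant along the profile.
lemma truncatedPrimitive_cubicProfile (hQ : 0 ≤ Q)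
    (hf : ∀ t ∈ Icc 0 1, f (cubicProfile Q t) = 6 * Q * (1 - 2 * t)) (ht : t ∈ Icc 0 1) :
    truncatedPrimitive Q f (cubicProfile Q t) = (6 * Q * (t * (1 - t))) ^ 2 / 2 := by
  have hsub : uIcc 0 t ⊆ Icc 0 1 := by
    rw [uIcc_of_le ht.1]; exact Icc_subset_Icc_right ht.2
  have himage := image_cubicProfile_Icc hQ
  have hderivCont : Continuous fun s => 6 * Q * (s * (1 - s)) := by fun_prop
  have hsubst : ∫ s in (0 : ℝ)..t, f (cubicProfile Q s) * (6 * Q * (s * (1 - s)))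
      = ∫ r in cubicProfile Q 0..cubicProfile Q t, f r :=
    intervalIntegral.integral_comp_mul_deriv''
      (continuous_cubicProfile Q).continuousOn
      (fun s _ => (hasDerivAt_cubicProfile Q s).hasDerivWithinAt) hderivCont.continuousOn
      ((continuousOn_of_comp_cubicProfile hQ hf).mono (himage ▸ image_mono hsub))
  have hprim : ∀ s, HasDerivAt (fun s => (6 * Q * (s * (1 - s))) ^ 2 / 2)
      (6 * Q * (1 - 2 * s) * (6 * Q * (s * (1 - s)))) s := fun s => by
    refine ((((hasDerivAt_id s).mul ((hasDerivAt_id s).const_sub 1)).const_mul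
      (6 * Q)).pow 2 |>.div_const 2).congr_deriv ?_
    simp only [id_eq, Pi.mul_apply]
    ring
  calc truncatedPrimitive Q f (cubicProfile Q t)
      = ∫ r in (0 : ℝ)..cubicProfile Q t, f r :=
        truncatedPrimitive_of_mem (himage ▸ mem_image_of_mem _ ht)
    _ = ∫ r in cubicProfile Q 0..cubicProfile Q t, f r := by rw [cubicProfile_zero]
    _ = ∫ s in (0 : ℝ)..t, 6 * Q * (1 - 2 * s) * (6 * Q * (s * (1 - s))) := by
        rw [← hsubst]
        exact intervalIntegral.integral_congr fun s hs => by simp only [hf s (hsub hs)]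
    _ = (6 * Q * (t * (1 - t))) ^ 2 / 2 := by
        rw [intervalIntegral.integral_eq_sub_of_hasDerivAt (fun s _ => hprim s)
          (Continuous.intervalIntegrable (by fun_prop) _ _)]
        ring

lemma truncatedPrimitive_pos (hf : ∀ t ∈ Icc 0 1, f (cubicProfile Q t) = 6 * Q * (1 - 2 * t))
    (ht : t ∈ Ioo 0 Q) : 0 < truncatedPrimitive Q f t := by
  have hQ : 0 < Q := ht.1.trans ht.2
  obtain ⟨s, hs, rfl⟩ := (image_cubicProfile_Icc hQ.le).superset (Ioo_subset_Icc_self ht)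
  rcases eq_endpoints_or_mem_Ioo_of_mem_Icc hs with rfl | rfl | ⟨hs0, hs1⟩
  · exact absurd ht.1 (cubicProfile_zero Q).not_gt
  · exact absurd ht.2 (cubicProfile_one Q).not_lt
  · have := sub_pos.2 hs1
    rw [truncatedPrimitive_cubicProfile hQ.le hf hs]
    positivity

lemma truncatedPrimitive_nonneg (hQ : 0 ≤ Q)
    (hf : ∀ t ∈ Icc 0 1, f (cubicProfile Q t) = 6 * Q * (1 - 2 * t)) (t : ℝ) :
    0 ≤ truncatedPrimitive Q f t := by
  have hFQ : truncatedPrimitive Q f Q = 0 := by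
    have h1 := truncatedPrimitive_cubicProfile hQ hf (right_mem_Icc.2 zero_le_one)
    rw [cubicProfile_one] at h1
    simpa only [sub_self, mul_zero, zero_pow two_ne_zero, zero_div] using h1
  rcases le_or_gt t 0 with ht0 | ht0
  · exact (truncatedPrimitive_of_nonpos ht0).ge
  rcases le_or_gt Q t with htQ | htQ
  · exact ((truncatedPrimitive_of_ge (continuousOn_of_comp_cubicProfile hQ hf) htQ).trans hFQ).ge
  · exact (truncatedPrimitive_pos hf ⟨ht0, htQ⟩).le

end Potential

theorem stmt15_general {Q d : ℝ} {f F φ gφ : ℝ → ℝ} (hFc : Continuous F) (hFmin : ∀ t, F 0 ≤ F t)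
    (hFlt : ∀ t ∈ Ioo 0 Q, F 0 < F t) (hFd : ∀ t ∈ Ioo 0 Q, HasDerivAt F (f t) t)
    (hd : 0 < d) (hφ : IsBVPSol Q f d φ) (hgφ : UdRep Q d φ gφ) :
    ∀ ε > 0, ∃ σ > 0, ∀ ψ g : ℝ → ℝ, UdRep Q d ψ g →
      (∃ x ∈ Icc (0 : ℝ) d, ε < |ψ x - φ x|) → Jd F d φ gφ + σ ≤ Jd F d ψ g := by
  intro ε hε
  have hQ := (hφ.pos hd).ne'
  obtain ⟨c, hc, horbit⟩ := hφ.exists_ae_eq_orbitSpeed hgφ hd hFc hFlt hFd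
  obtain ⟨B, hBpos, hB⟩ := exists_forall_orbitSpeed_le hFc (c + 1) (-ε) (Q + ε)
  set K := ε ^ 2 / (4 * (B ^ 2 * d)) with hK
  have hKpos : 0 < K := by positivity
  have hsmall := (hgφ.tendsto_speedDefect_orbitSpeed_div hQ hd.le hFc horbit).eventually_lt_const
    hKpos
  obtain ⟨η, hηK, hη, hη1⟩ := (hsmall.and (Ioc_mem_nhdsGT one_pos)).exists
  rw [div_lt_iff₀ hη] at hηK
  have hηF : ∀ t, η ≤ F t + (c + η) := fun t => by linarith [hFmin t]
  refine ⟨η * K, by positivity, fun ψ g hψ ⟨x, hx, hεx⟩ => ?_⟩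
  obtain ⟨y, hy, hyε⟩ := hψ.exists_abs_sub_eq hgφ hQ hε.le hx hεx.le
  have hφy := hφ.mem_Icc hd hy
  have hBy : ∀ t ∈ uIcc (ψ y) (φ y), orbitSpeed F (c + η) t ≤ B := fun t ht => by
    have hψy := abs_le.1 hyε.le
    refine (orbitSpeed_le_orbitSpeed (by linarith)).trans (hB t (uIcc_subset_Icc ?_ ?_ ht)) <;>
      constructor <;> linarith [hφy.1, hφy.2]
  have hdefect : 4 * (η * K) ≤
      speedDefect (orbitSpeed F (c + η)) d ψ g + speedDefect (orbitSpeed F (c + η)) d φ gφ := by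
    have hdist := hψ.mul_sq_sub_le_speedDefect_orbitSpeed hgφ hQ hFc hη hηF hy hBy
    rw [← sq_abs, hyε, ← div_le_iff₀' (by positivity)] at hdist
    exact le_of_eq_of_le (by rw [hK]; field_simp) hdist
  have hpF : ∀ t, orbitSpeed F (c + η) t ^ 2 = 2 * (F t + (c + η)) := fun t =>
    sq_orbitSpeed (hη.le.trans (hηF t))
  rw [hgφ.Jd_eq hQ hd.le (continuous_orbitSpeed hFc) hpF,
    hψ.Jd_eq hQ hd.le (continuous_orbitSpeed hFc) hpF]
  linarith

/-- Quantitative minimality of `φ̄_d`: functions in `U_d` that are uniformly far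
from `φ̄_d` have energy at least `J_d(φ̄_d) + σ` for some `σ > 0`. -/
theorem stmt15
    (Q : ℝ) (hQ : 0 < Q)
    (κ : ℝ → ℝ) (hκ : ∀ t ∈ Set.Icc (0 : ℝ) 1, κ (Q * (3 * t ^ 2 - 2 * t ^ 3)) = t)
    (f : ℝ → ℝ) (hf : ∀ s : ℝ, f s = 6 * Q * (1 - 2 * κ s))
    (F : ℝ → ℝ) (hF : ∀ t : ℝ, F t = ∫ s in (0 : ℝ)..t, Set.indicator (Set.Icc 0 Q) f s)
    (d : ℝ) (hd : d ∈ Set.Ioc (0 : ℝ) 1)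
    (φd : ℝ → ℝ) (hφd : IsBVPSol Q f d φd)
    (gφ : ℝ → ℝ) (hgφ : UdRep Q d φd gφ) :
    ∀ ε > 0, ∃ σ > 0, ∀ ψ g : ℝ → ℝ, UdRep Q d ψ g →
      (∃ x ∈ Set.Icc (0 : ℝ) d, ε < |ψ x - φd x|) →
      Jd F d φd gφ + σ ≤ Jd F d ψ g := by
  have hfq : ∀ t ∈ Icc 0 1, f (cubicProfile Q t) = 6 * Q * (1 - 2 * t) := fun t ht => by
    rw [hf, cubicProfile, hκ t ht]
  obtain rfl : F = truncatedPrimitive Q f := funext hF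
  have hF0 : truncatedPrimitive Q f 0 = 0 := truncatedPrimitive_of_nonpos le_rfl
  have hfc := continuousOn_of_comp_cubicProfile hQ.le hfq
  exact stmt15_general (continuous_truncatedPrimitive hfc)
    (fun t => hF0.trans_le (truncatedPrimitive_nonneg hQ.le hfq t))
    (fun t ht => hF0.trans_lt (truncatedPrimitive_pos hfq ht))
    (fun t ht => hasDerivAt_truncatedPrimitive hfc ht) hd.1 hφd hgφ
end
end
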